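/- Let n ≥ 2, let r be a nonzero real number, let κ, κ' be real numbers, and let a, a' : Fin n → ℝ be injective with ∑_j a_j = 0 and ∑_j a'_j = 0. If for every real u one has exp(κu)·∑_{k} exp(r·a_k·u)/∏_{s≠k}(a_k − a_s) = exp(κ'u)·∑_{k} exp(r·a'_k·u)/∏_{s≠k}(a'_k − a'_s), then κ = κ' and there exists a permutation τ of Fin n such that a'_j = a_{τ(j)} for every j. -/

import Mathlib

open Finset

/-!
Once the prefactor is absorbed, both sides are linear combinations of functions `u ↦ exp (c * u)`
with distinct frequencies `c = κ + r * a k` and nonzero coefficients. These functions are distinct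
characters of the additive group of reals, hence linearly independent by Dedekind's theorem, so the
two sets of frequencies coincide. As `a` and `a'` have the same sum, comparing the sums of the
frequencies gives `κ = κ'`, and then `a` and `a'` agree up to relabelling.
-/

section Reindexing

variable {α ι ι' : Type*}

theorem exists_equiv_of_range_eq {b : ι → α} {b' : ι' → α} (hb : Function.Injective b)
    (hb' : Function.Injective b') (hrange : Set.range b = Set.range b') :
    ∃ e : ι' ≃ ι, ∀ j, b' j = b (e j) :=
  ⟨((Equiv.ofInjective b' hb').trans (Equiv.setCongr hrange.symm)).trans
      (Equiv.ofInjective b hb).symm,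
    fun j => by simp [Equiv.apply_ofInjective_symm]⟩

theorem range_eq_of_sum_smul_eq {R M : Type*} [Semiring R] [AddCommMonoid M] [Module R M]
    [Fintype ι] [Fintype ι'] {v : α → M} (hv : LinearIndependent R v)
    {b : ι → α} {b' : ι' → α} (hb : Function.Injective b) (hb' : Function.Injective b')
    {w : ι → R} {w' : ι' → R} (hw : ∀ k, w k ≠ 0) (hw' : ∀ j, w' j ≠ 0)
    (h : ∑ k, w k • v (b k) = ∑ j, w' j • v (b' j)) :
    Set.range b = Set.range b' := by
  have hcoeff : Finsupp.embDomain ⟨b, hb⟩ (Finsupp.equivFunOnFinite.symm w) =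
      Finsupp.embDomain ⟨b', hb'⟩ (Finsupp.equivFunOnFinite.symm w') := by
    apply hv
    rw [Finsupp.linearCombination_embDomain, Finsupp.linearCombination_embDomain]
    simpa [Finsupp.linearCombination_apply, Finsupp.sum_fintype] using h
  have hsupport := congrArg (fun f : α →₀ R => (f.support : Set α)) hcoeff
  simpa [Finsupp.support_embDomain, Function.support_eq_univ hw, Function.support_eq_univ hw']
    using hsupport

theorem eq_of_forall_add_eq_add_of_sum_eq {G : Type*} [AddCancelCommMonoid G] [IsAddTorsionFree G]
    [Fintype ι] [Fintype ι'] [Nonempty ι] {x : ι → G} {x' : ι' → G} {c c' : G} (e : ι' ≃ ι)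
    (h : ∀ j, c' + x' j = c + x (e j)) (hsum : ∑ k, x k = ∑ j, x' j) : c = c' := by
  have htotal : Fintype.card ι • c' + ∑ j, x' j = Fintype.card ι • c + ∑ k, x k :=
    calc
      Fintype.card ι • c' + ∑ j, x' j = ∑ j, (c' + x' j) := by
        simp [sum_add_distrib, Fintype.card_congr e]
      _ = ∑ k, (c + x k) := by simp_rw [h]; exact e.sum_comp fun k => c + x k
      _ = Fintype.card ι • c + ∑ k, x k := by simp [sum_add_distrib]
  rw [hsum] at htotal
  exact nsmul_right_injective Fintype.card_ne_zero (add_right_cancel htotal).symm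

end Reindexing

/-- The character `u ↦ exp (c * u)` of the additive group of reals, written multiplicatively so
that Dedekind's theorem `linearIndependent_monoidHom` applies. -/
noncomputable def expCharacter (c : ℂ) : Multiplicative ℝ →* ℂ where
  toFun u := Complex.exp (c * u.toAdd)
  map_one' := by simp
  map_mul' u v := by simp [mul_add, Complex.exp_add]

theorem expCharacter_injective : Function.Injective expCharacter := by
  intro c d hcd
  have hderiv (z : ℂ) : HasDerivAt (fun u : ℝ => Complex.exp (z * u)) z 0 := by
    simpa using ((Complex.ofRealCLM.hasDerivAt (x := 0)).const_mul z).cexp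
  have hfun : (fun u : ℝ => Complex.exp (c * u)) = fun u : ℝ => Complex.exp (d * u) :=
    funext fun u => DFunLike.congr_fun hcd (Multiplicative.ofAdd u)
  exact (hderiv c).unique (hfun ▸ hderiv d)

theorem linearIndependent_exp_mul_ofReal :
    LinearIndependent ℂ fun (c : ℂ) (u : ℝ) => Complex.exp (c * u) :=
  (linearIndependent_monoidHom (Multiplicative ℝ) ℂ).comp expCharacter expCharacter_injective

theorem exp_mul_sum_exp_div {ι : Type*} (s : Finset ι) (κ u : ℂ) (x d : ι → ℂ) :
    Complex.exp (κ * u) * ∑ k ∈ s, Complex.exp (x k * u) / d k =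
      ∑ k ∈ s, (d k)⁻¹ * Complex.exp ((κ + x k) * u) := by
  rw [mul_sum]
  refine sum_congr rfl fun k _ => ?_
  rw [add_mul, Complex.exp_add]
  ring

theorem prod_erase_sub_ne_zero {R ι : Type*} [CommRing R] [IsDomain R] [DecidableEq ι]
    {a : ι → R} (ha : Function.Injective a) (s : Finset ι) (k : ι) :
    ∏ j ∈ s.erase k, (a k - a j) ≠ 0 :=
  prod_ne_zero_iff.2 fun _ hj => sub_ne_zero.2 (ha.ne (ne_of_mem_erase hj).symm)

theorem CPn_localization_eq_implies_perm_general {ι ι' : Type*} [Fintype ι] [Fintype ι']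
    [DecidableEq ι] [DecidableEq ι'] [Nonempty ι] {r κ κ' : ℂ} (hr : r ≠ 0)
    {a : ι → ℂ} {a' : ι' → ℂ} (ha : Function.Injective a) (ha' : Function.Injective a')
    (hsum : ∑ j, a j = ∑ j, a' j)
    (h : ∀ u : ℝ,
      Complex.exp (κ * u) *
          ∑ k, Complex.exp (r * a k * u) / ∏ s ∈ univ.erase k, (a k - a s) =
      Complex.exp (κ' * u) *
          ∑ k, Complex.exp (r * a' k * u) / ∏ s ∈ univ.erase k, (a' k - a' s)) :
    κ = κ' ∧ ∃ e : ι' ≃ ι, ∀ j, a' j = a (e j) := by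
  have hfreq (c : ℂ) : Function.Injective fun z : ℂ => c + r * z :=
    (add_right_injective c).comp (mul_right_injective₀ hr)
  have hrange : Set.range (fun k => κ + r * a k) = Set.range fun j => κ' + r * a' j :=
    range_eq_of_sum_smul_eq linearIndependent_exp_mul_ofReal
      ((hfreq κ).comp ha) ((hfreq κ').comp ha')
      (fun k => inv_ne_zero (prod_erase_sub_ne_zero ha univ k))
      (fun j => inv_ne_zero (prod_erase_sub_ne_zero ha' univ j))
      (funext fun u => by simpa [exp_mul_sum_exp_div] using h u)
  obtain ⟨e, he⟩ := exists_equiv_of_range_eq ((hfreq κ).comp ha) ((hfreq κ').comp ha') hrange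
  obtain rfl : κ = κ' :=
    eq_of_forall_add_eq_add_of_sum_eq (x := fun k => r * a k) (x' := fun j => r * a' j) e he
      (by rw [← mul_sum, ← mul_sum, hsum])
  exact ⟨rfl, e, fun j => hfreq κ (he j)⟩

/-- The implication (a) ⟹ (b) in the proof of Proposition 4.3 (Thcp) of the paper: equality of
the localization expressions for `S_ψ` and `S_ψ'` on the coadjoint orbit `ℂP^{n-1}` forces
`κ = κ'` and the eigenvalue families `a`, `a'` to agree up to a permutation. -/
theorem CPn_localization_eq_implies_perm
    (n : ℕ) (hn : 2 ≤ n) (r : ℝ) (hr : r ≠ 0) (κ κ' : ℝ)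
    (a a' : Fin n → ℝ) (ha : Function.Injective a) (ha' : Function.Injective a')
    (hsum : ∑ j, a j = 0) (hsum' : ∑ j, a' j = 0)
    (h : ∀ u : ℝ,
      Real.exp (κ * u) *
          ∑ k, Real.exp (r * a k * u) / ∏ s ∈ univ.erase k, (a k - a s) =
      Real.exp (κ' * u) *
          ∑ k, Real.exp (r * a' k * u) / ∏ s ∈ univ.erase k, (a' k - a' s)) :
    κ = κ' ∧ ∃ τ : Equiv.Perm (Fin n), ∀ j, a' j = a (τ j) := by
  have : Nonempty (Fin n) := ⟨0, by lia⟩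
  exact_mod_cast CPn_localization_eq_implies_perm_general (κ := κ) (κ' := κ')
    (a := fun k => (a k : ℂ)) (a' := fun k => (a' k : ℂ)) (Complex.ofReal_ne_zero.2 hr)
    (Complex.ofReal_injective.comp ha) (Complex.ofReal_injective.comp ha')
    (mod_cast hsum.trans hsum'.symm) (mod_cast h)
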